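/- arXiv:2303.13061 — 3 statements merged into one kernel-verified Lean document; each statement's English description precedes it below -/
import Mathlib

section
/- Let Q2 = conv({(0,0,0,0), (1,0,0,0), (0,1,0,1), (0,0,1,1), (1,1,1,0), (1,1,1,1)}) ⊂ ℝ^4. Then ℤA(Q2) = ℤ^5, and Q2 has the integer decomposition property: for every positive integer n and every a ∈ nQ2 ∩ ℤ^4 there exist a_1,…,a_n ∈ Q2 ∩ ℤ^4 with a = a_1 + ⋯ + a_n. Consequently Q2 is normal: ℕA(Q2) = ℤA(Q2) ∩ ℝ≥0A(Q2). -/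
/-!
STATEMENT 13: `Q2 = conv({0000, 1000, 0101, 0011, 1110, 1111}) ⊆ ℝ⁴` satisfies
`ℤA(Q2) = ℤ⁵`, has the integer decomposition property, and is therefore normal.
-/

open scoped NNReal Pointwise

noncomputable section

def intCast {α : Type*} (v : α → ℤ) : α → ℝ := fun i => (v i : ℝ)

def latticeA {α : Type*} (L : Set (α → ℤ)) : Set ((α → ℤ) × ℤ) :=
  (fun v => (v, (1 : ℤ))) '' L

def prodCast {α : Type*} (x : (α → ℤ) × ℤ) : (α → ℝ) × ℝ :=
  (intCast x.1, (x.2 : ℝ))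

/-- Normality: `ℕA(P) = ℤA(P) ∩ ℝ≥0A(P)`. -/
def IsNormalPolytope {α : Type*} (L : Set (α → ℤ)) : Prop :=
  ∀ x : (α → ℤ) × ℤ,
    x ∈ AddSubmonoid.closure (latticeA L) ↔
      x ∈ AddSubgroup.closure (latticeA L) ∧
        prodCast x ∈ Submodule.span ℝ≥0 (prodCast '' latticeA L)

/-- The six vertices (= lattice points) of `Q2`. -/
def V2 : Set (Fin 4 → ℤ) :=
  {![0,0,0,0], ![1,0,0,0], ![0,1,0,1], ![0,0,1,1], ![1,1,1,0], ![1,1,1,1]}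

/-- The polytope `Q2`. -/
def Q2 : Set (Fin 4 → ℝ) := convexHull ℝ (intCast '' V2)

/-- The inequalities of the cone over `Q2`. -/
def CIneq (y : (Fin 4 → ℝ) × ℝ) : Prop :=
  (y.1 1 + y.1 2 - y.1 3 ≤ 2 * y.1 0 ∧ y.1 1 + y.1 2 - y.1 3 ≤ 2 * y.1 1 ∧
    y.1 1 + y.1 2 - y.1 3 ≤ 2 * y.1 2 ∧ 0 ≤ y.1 1 + y.1 2 - y.1 3) ∧
  (y.1 0 + y.1 1 + y.1 2 - y.2 ≤ 2 * y.1 0 ∧ y.1 0 + y.1 1 + y.1 2 - y.2 ≤ 2 * y.1 1 ∧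
    y.1 0 + y.1 1 + y.1 2 - y.2 ≤ 2 * y.1 2 ∧
    y.1 0 + y.1 1 + y.1 2 - y.2 ≤ 2 * (y.1 1 + y.1 2 - y.1 3))

theorem CIneq.add {y z : (Fin 4 → ℝ) × ℝ} (hy : CIneq y) (hz : CIneq z) : CIneq (y + z) := by
  unfold CIneq at *
  simp only [Prod.fst_add, Prod.snd_add, Pi.add_apply]
  refine ⟨⟨?_, ?_, ?_, ?_⟩, ?_, ?_, ?_, ?_⟩ <;> linarith

theorem CIneq.smul {y : (Fin 4 → ℝ) × ℝ} (hy : CIneq y) {c : ℝ} (hc : 0 ≤ c) :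
    CIneq (c • y) := by
  unfold CIneq at *
  obtain ⟨⟨h1, h2, h3, h4⟩, h5, h6, h7, h8⟩ := hy
  simp only [Prod.smul_fst, Prod.smul_snd, Pi.smul_apply, smul_eq_mul]
  have k1 := mul_le_mul_of_nonneg_left h1 hc
  have k2 := mul_le_mul_of_nonneg_left h2 hc
  have k3 := mul_le_mul_of_nonneg_left h3 hc
  have k4 := mul_le_mul_of_nonneg_left h4 hc
  have k5 := mul_le_mul_of_nonneg_left h5 hc
  have k6 := mul_le_mul_of_nonneg_left h6 hc
  have k7 := mul_le_mul_of_nonneg_left h7 hc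
  have k8 := mul_le_mul_of_nonneg_left h8 hc
  refine ⟨⟨?_, ?_, ?_, ?_⟩, ?_, ?_, ?_, ?_⟩ <;> linarith

theorem CIneq.vertex {v : Fin 4 → ℤ} (hv : v ∈ V2) : CIneq (intCast v, 1) := by
  simp only [V2, Set.mem_insert_iff, Set.mem_singleton_iff] at hv
  rcases hv with rfl | rfl | rfl | rfl | rfl | rfl <;>
    simp only [CIneq, intCast] <;> norm_cast

theorem decomp (a : Fin 4 → ℤ) (m s : ℤ) :
    (a, m) = (m - a 0 - a 1 - a 2 + 2 * s) • ((![0,0,0,0], 1) : (Fin 4 → ℤ) × ℤ)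
      + (a 0 - s) • ((![1,0,0,0], 1) : (Fin 4 → ℤ) × ℤ)
      + (a 1 - s) • ((![0,1,0,1], 1) : (Fin 4 → ℤ) × ℤ)
      + (a 2 - s) • ((![0,0,1,1], 1) : (Fin 4 → ℤ) × ℤ)
      + (a 1 + a 2 - a 3 - s) • ((![1,1,1,0], 1) : (Fin 4 → ℤ) × ℤ)
      + (a 3 - a 1 - a 2 + 2 * s) • ((![1,1,1,1], 1) : (Fin 4 → ℤ) × ℤ) := by
  refine Prod.ext ?_ ?_
  · funext i
    fin_cases i <;> simp <;> ring
  · simp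
    ring

theorem mem_latticeA {v : Fin 4 → ℤ} (hv : v ∈ V2) : (v, (1 : ℤ)) ∈ latticeA V2 := ⟨v, hv, rfl⟩

theorem zsmul_mem_closure {x : (Fin 4 → ℤ) × ℤ} (hx : x ∈ latticeA V2) {c : ℤ} (hc : 0 ≤ c) :
    c • x ∈ AddSubmonoid.closure (latticeA V2) := by
  lift c to ℕ using hc
  rw [natCast_zsmul]
  exact AddSubmonoid.nsmul_mem _ (AddSubmonoid.subset_closure hx) c

theorem mem_closure_of_CIneq {a : Fin 4 → ℤ} {m : ℤ} (h : CIneq (prodCast (a, m))) :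
    (a, m) ∈ AddSubmonoid.closure (latticeA V2) := by
  simp only [CIneq, prodCast, intCast] at h
  norm_cast at h
  obtain ⟨s, hs⟩ : ∃ s : ℤ, s ≤ a 0 ∧ s ≤ a 1 ∧ s ≤ a 2 ∧ s ≤ a 1 + a 2 - a 3 ∧
      a 1 + a 2 - a 3 ≤ 2 * s ∧ a 0 + a 1 + a 2 - m ≤ 2 * s :=
    ⟨min (min (a 0) (a 1)) (min (a 2) (a 1 + a 2 - a 3)), by omega⟩
  rw [decomp a m s]
  refine add_mem (add_mem (add_mem (add_mem (add_mem ?_ ?_) ?_) ?_) ?_) ?_ <;>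
    exact zsmul_mem_closure (mem_latticeA (by simp [V2])) (by omega)

theorem exists_fun {x : (Fin 4 → ℤ) × ℤ} (hx : x ∈ AddSubmonoid.closure (latticeA V2)) :
    ∃ (n : ℕ) (f : Fin n → (Fin 4 → ℤ)), (∀ i, f i ∈ V2) ∧ x.1 = ∑ i, f i ∧ x.2 = n := by
  induction hx using AddSubmonoid.closure_induction with
  | mem x hx =>
    obtain ⟨v, hv, rfl⟩ := hx
    exact ⟨1, fun _ => v, fun _ => hv, by simp, by simp⟩
  | zero => exact ⟨0, Fin.elim0, fun i => i.elim0, by simp, by simp⟩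
  | add x y _ _ ihx ihy =>
    obtain ⟨n, f, hf, h1, h2⟩ := ihx
    obtain ⟨k, g, hg, h3, h4⟩ := ihy
    refine ⟨n + k, Fin.append f g, fun i => ?_, ?_, ?_⟩
    · refine Fin.addCases (fun j => ?_) (fun j => ?_) i
      · simpa using hf j
      · simpa using hg j
    · simp [Fin.sum_univ_add, h1, h3]
    · simp [h2, h4]

theorem CIneq.of_mem_Q2 {q : Fin 4 → ℝ} (hq : q ∈ Q2) : CIneq (q, 1) := by
  have hc : Convex ℝ {q : Fin 4 → ℝ | CIneq (q, 1)} := by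
    intro x hx y hy a b ha hb hab
    have := (CIneq.smul hx ha).add (CIneq.smul hy hb)
    simpa [hab] using this
  refine convexHull_min ?_ hc hq
  rintro _ ⟨v, hv, rfl⟩
  exact CIneq.vertex hv

theorem closure_eq_top : AddSubgroup.closure (latticeA V2) = ⊤ := by
  rw [eq_top_iff]
  rintro ⟨a, m⟩ -
  rw [decomp a m 0]
  refine add_mem (add_mem (add_mem (add_mem (add_mem ?_ ?_) ?_) ?_) ?_) ?_ <;>
    exact zsmul_mem (AddSubgroup.subset_closure (mem_latticeA (by simp [V2]))) _

theorem stmt_13 :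
    -- `ℤA(Q2) = ℤ⁵`
    AddSubgroup.closure (latticeA V2) = ⊤ ∧
    -- the integer decomposition property
    (∀ n : ℕ, 0 < n → ∀ a : Fin 4 → ℤ,
      intCast a ∈ (n : ℝ) • Q2 →
        ∃ f : Fin n → (Fin 4 → ℤ), (∀ i, f i ∈ V2) ∧ a = ∑ i, f i) ∧
    -- normality
    IsNormalPolytope V2 := by
  refine ⟨closure_eq_top, ?_, ?_⟩
  · rintro n - a ⟨q, hq, hqa⟩
    have h : CIneq (prodCast (a, (n : ℤ))) := by
      have h1 := (CIneq.of_mem_Q2 hq).smul (Nat.cast_nonneg (α := ℝ) n)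
      have h2 : prodCast (a, (n : ℤ)) = (n : ℝ) • ((q, 1) : (Fin 4 → ℝ) × ℝ) := by
        refine Prod.ext ?_ ?_
        · exact hqa.symm
        · simp [prodCast]
      rw [h2]
      exact h1
    obtain ⟨k, f, hf, h1, h2⟩ := exists_fun (mem_closure_of_CIneq h)
    obtain rfl : n = k := Nat.cast_injective (R := ℤ) h2
    exact ⟨f, hf, h1⟩
  · intro x
    constructor
    · intro hx
      refine ⟨closure_eq_top ▸ AddSubgroup.mem_top x, ?_⟩
      induction hx using AddSubmonoid.closure_induction with
      | mem x hx => exact Submodule.subset_span ⟨x, hx, rfl⟩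
      | zero =>
        have : prodCast (0 : (Fin 4 → ℤ) × ℤ) = 0 := by
          refine Prod.ext ?_ ?_
          · funext i
            simp [prodCast, intCast]
          · simp [prodCast]
        rw [this]
        exact zero_mem _
      | add x y _ _ ihx ihy =>
        have : prodCast (x + y) = prodCast x + prodCast y := by
          refine Prod.ext ?_ ?_
          · funext i
            simp [prodCast, intCast]
          · simp [prodCast]
        rw [this]
        exact add_mem ihx ihy
    · rintro ⟨-, hx⟩
      apply mem_closure_of_CIneq (a := x.1) (m := x.2)
      change CIneq (prodCast x)
      generalize prodCast x = y at hx
      induction hx using Submodule.span_induction with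
      | mem y hy =>
        obtain ⟨_, ⟨v, hv, rfl⟩, rfl⟩ := hy
        simpa [prodCast] using CIneq.vertex hv
      | zero => simp [CIneq]
      | add y z _ _ h1 h2 => exact h1.add h2
      | smul c y _ h => exact h.smul c.2

end
end

section
/- Let G ⊆ ℤ^8 be the subgroup generated by the six vectors (1,1,1,1,0,0,0,0), (0,0,0,0,1,1,1,1), (2,0,0,0,2,0,0,0), (0,2,0,0,0,2,0,0), (0,0,2,0,0,0,2,0), (0,0,0,2,0,0,0,2) (the columns of the matrix M_{Q2} of facet-pairings of the polytope Q2). Then ℤ^8 / G ≅ ℤ^3 ⊕ (ℤ/2ℤ)^3. (By the standard description of divisor class groups of normal toric rings, this says that Cl(𝕜[Q2]) ≅ ℤ^3 ⊕ (ℤ/2ℤ)^3, so Q2 is a normal (0,1)-polytope of rank 3 whose divisor class group has torsion.) -/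
/-!
STATEMENT 14: for the subgroup `G ⊆ ℤ⁸` generated by the six columns of the
matrix `M_{Q2}`, one has `ℤ⁸ / G ≅ ℤ³ ⊕ (ℤ/2ℤ)³`
(so `Cl(𝕜[Q2]) ≅ ℤ³ ⊕ (ℤ/2ℤ)³`).
-/

noncomputable section

/-- The six columns of the matrix `M_{Q2}`. -/
def colsMQ2 : Fin 6 → (Fin 8 → ℤ) :=
  ![![1,1,1,1,0,0,0,0],
    ![0,0,0,0,1,1,1,1],
    ![2,0,0,0,2,0,0,0],
    ![0,2,0,0,0,2,0,0],
    ![0,0,2,0,0,0,2,0],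
    ![0,0,0,2,0,0,0,2]]

/-- The explicit surjection whose kernel is `G`. -/
def phiMQ2 : (Fin 8 → ℤ) →+ ((Fin 3 → ℤ) × (Fin 3 → ZMod 2)) where
  toFun x := (![(x 1 - x 5) - (x 0 - x 4), (x 2 - x 6) - (x 0 - x 4), (x 3 - x 7) - (x 0 - x 4)],
    ![((x 5 - x 4 : ℤ) : ZMod 2), ((x 6 - x 4 : ℤ) : ZMod 2), ((x 7 - x 4 : ℤ) : ZMod 2)])
  map_zero' := by
    ext i <;> fin_cases i <;> simp
  map_add' x y := by
    ext i <;> fin_cases i <;> simp <;> ring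

lemma phiMQ2_surj : Function.Surjective phiMQ2 := by
  rintro ⟨f, g⟩
  obtain ⟨p, hp⟩ := ZMod.intCast_surjective (g 0)
  obtain ⟨q, hq⟩ := ZMod.intCast_surjective (g 1)
  obtain ⟨r, hr⟩ := ZMod.intCast_surjective (g 2)
  refine ⟨![0, f 0 + p, f 1 + q, f 2 + r, 0, p, q, r], ?_⟩
  ext i <;> fin_cases i <;> simp [phiMQ2, hp, hq, hr]

lemma phiMQ2_ker : AddSubgroup.closure (Set.range colsMQ2) = phiMQ2.ker := by
  apply le_antisymm
  · rw [AddSubgroup.closure_le]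
    rintro _ ⟨j, rfl⟩
    rw [SetLike.mem_coe, AddMonoidHom.mem_ker]
    fin_cases j <;> ext i <;> fin_cases i <;> simp [phiMQ2, colsMQ2] <;> decide
  · intro x hx
    rw [AddMonoidHom.mem_ker] at hx
    have h1 := congrArg Prod.fst hx
    have h2 := congrArg Prod.snd hx
    have a0 : (x 1 - x 5) - (x 0 - x 4) = 0 := congrFun h1 0
    have a1 : (x 2 - x 6) - (x 0 - x 4) = 0 := congrFun h1 1
    have a2 : (x 3 - x 7) - (x 0 - x 4) = 0 := congrFun h1 2
    have b0 : ((x 5 - x 4 : ℤ) : ZMod 2) = 0 := congrFun h2 0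
    have b1 : ((x 6 - x 4 : ℤ) : ZMod 2) = 0 := congrFun h2 1
    have b2 : ((x 7 - x 4 : ℤ) : ZMod 2) = 0 := congrFun h2 2
    rw [ZMod.intCast_zmod_eq_zero_iff_dvd] at b0 b1 b2
    obtain ⟨p, hp⟩ := b0
    obtain ⟨q, hq⟩ := b1
    obtain ⟨r, hr⟩ := b2
    push_cast at hp hq hr
    have key : x = x 0 • colsMQ2 0 + x 4 • colsMQ2 1 + p • colsMQ2 3 + q • colsMQ2 4
        + r • colsMQ2 5 := by
      ext i
      fin_cases i <;> simp [colsMQ2] <;> lia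
    have hm : ∀ j, colsMQ2 j ∈ AddSubgroup.closure (Set.range colsMQ2) :=
      fun j => AddSubgroup.subset_closure ⟨j, rfl⟩
    rw [key]
    have hz : ∀ (n : ℤ) j, n • colsMQ2 j ∈ AddSubgroup.closure (Set.range colsMQ2) :=
      fun n j => AddSubgroup.zsmul_mem _ (hm j) n
    exact add_mem (add_mem (add_mem (add_mem (hz _ _) (hz _ _)) (hz _ _)) (hz _ _)) (hz _ _)

theorem stmt_14 :
    Nonempty
      (((Fin 8 → ℤ) ⧸ AddSubgroup.closure (Set.range colsMQ2)) ≃+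
        ((Fin 3 → ℤ) × (Fin 3 → ZMod 2))) := by
  exact ⟨(QuotientAddGroup.quotientAddEquivOfEq phiMQ2_ker).trans
    (QuotientAddGroup.quotientKerEquivOfSurjective phiMQ2 phiMQ2_surj)⟩

end
end

section
/- Let Q1 = conv({(0,0,0,0), (1,1,0,0), (1,0,1,0), (0,1,1,0), (0,0,0,1), (1,1,1,1)}) and Q2 = conv({(0,0,0,0), (1,0,0,0), (0,1,0,1), (0,0,1,1), (1,1,1,0), (1,1,1,1)}) in ℝ^4. Then the toric ring 𝕜[Q2] is integrally closed (a normal domain) while 𝕜[Q1] is not integrally closed; consequently 𝕜[Q1] and 𝕜[Q2] are not isomorphic as 𝕜-algebras, even though Q1 and Q2 are combinatorially equivalent (0,1)-polytopes with the same number of vertices and facets. -/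
/-!
STATEMENT 15: the toric ring `𝕜[Q2]` is integrally closed while `𝕜[Q1]` is not;
consequently `𝕜[Q1]` and `𝕜[Q2]` are not isomorphic as `𝕜`-algebras.
-/

open scoped NNReal

noncomputable section

/-- The toric ring `𝕜[P]` of an integral polytope with lattice point set `L`. -/
abbrev toricRing (𝕜 : Type*) [Field 𝕜] {α : Type*} (L : Set (α → ℤ)) : Type _ :=
  AddMonoidAlgebra 𝕜 (AddSubmonoid.closure (latticeA L))

/-- The six vertices (= lattice points) of `Q1`. -/
def V1 : Set (Fin 4 → ℤ) :=
  {![0,0,0,0], ![1,1,0,0], ![1,0,1,0], ![0,1,1,0], ![0,0,0,1], ![1,1,1,1]}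

theorem isIntegrallyClosed_of_retract {R S : Type*} [CommRing R] [CommRing S] [IsDomain R]
    [IsDomain S] [IsIntegrallyClosed S] (f : R →+* S) (hf : Function.Injective f) (p : S → R)
    (hp : ∀ a s, p (f a * s) = a * p s) (hp' : ∀ a, p (f a) = a) : IsIntegrallyClosed R := by
  rw [isIntegrallyClosed_iff (FractionRing R)]
  intro x hx
  obtain ⟨a, b, hb, rfl⟩ := IsFractionRing.div_surjective (A := R) x
  have hb0 : b ≠ 0 := nonZeroDivisors.ne_zero hb
  let g : FractionRing R →+* FractionRing S := IsFractionRing.map hf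
  have hg : ∀ r, g (algebraMap R _ r) = algebraMap S _ (f r) := fun r => by
    simp [g, IsFractionRing.map]
  have hx' : IsIntegral S (g (algebraMap R (FractionRing R) a / algebraMap R _ b)) := by
    obtain ⟨q, hq, hq0⟩ := hx
    refine ⟨q.map f, hq.map f, ?_⟩
    have := congrArg g hq0
    rw [Polynomial.hom_eval₂, map_zero] at this
    rw [Polynomial.eval₂_map]
    have hcomp : (algebraMap S (FractionRing S)).comp f = g.comp (algebraMap R _) :=
      RingHom.ext fun r => (hg r).symm
    rw [hcomp]
    exact this
  obtain ⟨c, hc⟩ := IsIntegrallyClosed.isIntegral_iff.1 hx'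
  have hfb : algebraMap S (FractionRing S) (f b) ≠ 0 := by
    simpa using fun h => hb0 (hf (by simpa using h))
  have hfa : f b * c = f a := by
    apply IsFractionRing.injective S (FractionRing S)
    rw [map_mul, hc, map_div₀, hg, hg]
    field_simp
  refine ⟨p c, ?_⟩
  have h1 : b * p c = a := by rw [← hp, hfa, hp']
  have hbb : algebraMap R (FractionRing R) b ≠ 0 := by simpa using hb0
  rw [eq_div_iff hbb, ← map_mul, mul_comm, h1]

instance toric_uniqueSums (M : AddSubmonoid ((Fin 4 → ℤ) × ℤ)) : UniqueSums M :=
  UniqueSums.of_injective_addHom (⟨Subtype.val, fun _ _ => rfl⟩ : M →ₙ+ ((Fin 4 → ℤ) × ℤ))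
    (fun _ _ h => Subtype.ext h) inferInstance

instance toric_isDomain (𝕜 : Type*) [Field 𝕜] (M : AddSubmonoid ((Fin 4 → ℤ) × ℤ)) :
    IsDomain (AddMonoidAlgebra 𝕜 M) := NoZeroDivisors.to_isDomain _

theorem comap_single_of_not_range {𝕜 M N : Type*} [Field 𝕜] {f : M → N} {r : 𝕜} {n : N}
    (hn : n ∉ Set.range f) (hf : Function.Injective f) :
    AddMonoidAlgebra.comapDomain f hf (AddMonoidAlgebra.single n r) = 0 := by
  ext m
  have : n ≠ f m := fun h => hn ⟨m, h.symm⟩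
  simp [this]

/-- A monoid which embeds purely in `ℕ^n` has an integrally closed monoid algebra. -/
theorem isIntegrallyClosed_of_pure (𝕜 : Type*) [Field 𝕜] {M σ : Type*} [AddCommMonoid M]
    [IsDomain (AddMonoidAlgebra 𝕜 M)]
    (φ : M →+ (σ →₀ ℕ)) (hφ : Function.Injective φ)
    (hpure : ∀ m n d, φ m + d = φ n → d ∈ Set.range φ) :
    IsIntegrallyClosed (AddMonoidAlgebra 𝕜 M) := by
  have : IsIntegrallyClosed (AddMonoidAlgebra 𝕜 (σ →₀ ℕ)) :=
    inferInstanceAs (IsIntegrallyClosed (MvPolynomial σ 𝕜))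
  have : IsDomain (AddMonoidAlgebra 𝕜 (σ →₀ ℕ)) :=
    inferInstanceAs (IsDomain (MvPolynomial σ 𝕜))
  have key : ∀ (a : AddMonoidAlgebra 𝕜 M) (s : AddMonoidAlgebra 𝕜 (σ →₀ ℕ)),
      AddMonoidAlgebra.comapDomain φ hφ (AddMonoidAlgebra.mapDomain φ a * s)
        = a * AddMonoidAlgebra.comapDomain φ hφ s := by
    intro a s
    induction a using AddMonoidAlgebra.induction_linear with
    | zero => simp
    | add a b ha hb => simp only [AddMonoidAlgebra.mapDomain_add, add_mul,
        AddMonoidAlgebra.comapDomain_add, ha, hb]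
    | single m r =>
      induction s using AddMonoidAlgebra.induction_linear with
      | zero => simp
      | add a b ha hb => simp only [mul_add, AddMonoidAlgebra.comapDomain_add, ha, hb]
      | single d t =>
        rw [AddMonoidAlgebra.mapDomain_single, AddMonoidAlgebra.single_mul_single]
        by_cases hd : d ∈ Set.range φ
        · obtain ⟨n, rfl⟩ := hd
          rw [← map_add, AddMonoidAlgebra.comapDomain_single_map,
            AddMonoidAlgebra.comapDomain_single_map, AddMonoidAlgebra.single_mul_single]
        · rw [comap_single_of_not_range hd,
            comap_single_of_not_range, mul_zero]
          rintro ⟨n, hn⟩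
          exact hd (hpure m n d hn.symm)
  refine isIntegrallyClosed_of_retract (AddMonoidAlgebra.mapDomainRingHom 𝕜 φ)
    (AddMonoidAlgebra.mapDomain_injective hφ) (AddMonoidAlgebra.comapDomain φ hφ) key ?_
  intro a
  have h := key a 1
  rw [mul_one, AddMonoidAlgebra.one_def, ← map_zero φ,
    AddMonoidAlgebra.comapDomain_single_map, ← AddMonoidAlgebra.one_def, mul_one] at h
  exact h

/-- The facet functionals of `Q2`. -/
def facet2 (x : (Fin 4 → ℤ) × ℤ) : Fin 8 → ℤ :=
  ![x.1 1 + x.1 2 - x.1 3,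
    2 * x.1 0 - (x.1 1 + x.1 2 - x.1 3),
    2 * x.1 1 - (x.1 1 + x.1 2 - x.1 3),
    2 * x.1 2 - (x.1 1 + x.1 2 - x.1 3),
    x.2 - x.1 0 - x.1 1 - x.1 2 + 2 * (x.1 1 + x.1 2 - x.1 3),
    x.2 + x.1 0 - x.1 1 - x.1 2,
    x.2 - x.1 0 + x.1 1 - x.1 2,
    x.2 - x.1 0 - x.1 1 + x.1 2]

theorem facet2_add (x y) : facet2 (x + y) = facet2 x + facet2 y := by
  ext i; fin_cases i <;> simp [facet2] <;> ring

theorem facet2_nonneg {x} (hx : x ∈ AddSubmonoid.closure (latticeA V2)) : 0 ≤ facet2 x := by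
  induction hx using AddSubmonoid.closure_induction with
  | mem x hx =>
    obtain ⟨v, hv, rfl⟩ := hx
    simp only [V2, Set.mem_insert_iff, Set.mem_singleton_iff] at hv
    rcases hv with rfl | rfl | rfl | rfl | rfl | rfl <;> intro i <;> fin_cases i <;>
      simp [facet2]
  | zero => intro i; fin_cases i <;> simp [facet2]
  | add x y _ _ hx hy => rw [facet2_add]; exact add_nonneg hx hy

theorem mem_of_facet2_nonneg {x} (h : 0 ≤ facet2 x) :
    x ∈ AddSubmonoid.closure (latticeA V2) := by
  have h0 := h 0
  have h1 := h 1
  have h2 := h 2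
  have h3 := h 3
  have h4 := h 4
  have h5 := h 5
  have h6 := h 6
  have h7 := h 7
  simp [facet2] at h0 h1 h2 h3 h4 h5 h6 h7
  have gen : ∀ v ∈ V2, ∀ n : ℕ, n • (v, (1 : ℤ)) ∈ AddSubmonoid.closure (latticeA V2) :=
    fun v hv n => AddSubmonoid.nsmul_mem _
      (AddSubmonoid.subset_closure (show _ ∈ latticeA V2 from ⟨v, hv, rfl⟩)) n
  have hex : ∃ n0 n1 n2 n3 n4 n5 : ℕ, x.1 0 = n1 + n4 + n5 ∧ x.1 1 = n2 + n4 + n5 ∧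
      x.1 2 = n3 + n4 + n5 ∧ x.1 3 = n2 + n3 + n5 ∧ x.2 = n0 + n1 + n2 + n3 + n4 + n5 := by
    obtain ⟨v, w⟩ := x
    simp only at *
    generalize v 0 = a at *
    generalize v 1 = b at *
    generalize v 2 = c at *
    generalize v 3 = d at *
    obtain ⟨s, hs⟩ : ∃ s, s = min (min 0 (a - (b + c - d))) (min (b - (b + c - d)) (c - (b + c - d))) :=
      ⟨_, rfl⟩
    refine ⟨(w - a - b - c + 2 * (b + c - d) + 2 * s).toNat, (a - (b + c - d) - s).toNat,
      (b - (b + c - d) - s).toNat, (c - (b + c - d) - s).toNat, (-s).toNat,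
      (b + c - d + 2 * s).toNat, ?_⟩
    have hs1 : s = 0 ∨ s = a - (b + c - d) ∨ s = b - (b + c - d) ∨ s = c - (b + c - d) := by omega
    have hs2 : s ≤ 0 ∧ s ≤ a - (b + c - d) ∧ s ≤ b - (b + c - d) ∧ s ≤ c - (b + c - d) := by omega
    clear hs
    have e0 : 0 ≤ w - a - b - c + 2 * (b + c - d) + 2 * s := by omega
    have e5 : 0 ≤ b + c - d + 2 * s := by omega
    rw [Int.toNat_of_nonneg e0, Int.toNat_of_nonneg e5, Int.toNat_of_nonneg (by omega),
      Int.toNat_of_nonneg (by omega), Int.toNat_of_nonneg (by omega),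
      Int.toNat_of_nonneg (by omega)]
    refine ⟨?_, ?_, ?_, ?_, ?_⟩ <;> ring
  obtain ⟨n0, n1, n2, n3, n4, n5, q0, q1, q2, q3, q4⟩ := hex
  have hx : x = n0 • (![0,0,0,0], (1 : ℤ)) + n1 • (![1,0,0,0], (1 : ℤ)) +
      n2 • (![0,1,0,1], (1 : ℤ)) + n3 • (![0,0,1,1], (1 : ℤ)) + n4 • (![1,1,1,0], (1 : ℤ)) +
      n5 • (![1,1,1,1], (1 : ℤ)) := by
    ext i
    · fin_cases i <;> simp [q0, q1, q2, q3]
    · simp [q4]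
  rw [hx]
  refine add_mem (add_mem (add_mem (add_mem (add_mem ?_ ?_) ?_) ?_) ?_) ?_ <;>
    exact gen _ (by simp [V2]) _

theorem facet2_injective : Function.Injective facet2 := by
  intro x y h
  have h0 := congrFun h 0
  have h1 := congrFun h 1
  have h2 := congrFun h 2
  have h3 := congrFun h 3
  have h4 := congrFun h 4
  simp [facet2] at h0 h1 h2 h3 h4
  ext i
  · fin_cases i <;> simp <;> omega
  · omega

def embed2 : AddSubmonoid.closure (latticeA V2) →+ (Fin 8 →₀ ℕ) where
  toFun x := Finsupp.equivFunOnFinite.symm fun i => (facet2 x.1 i).toNat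
  map_zero' := by ext i; fin_cases i <;> simp [facet2]
  map_add' x y := by
    ext i
    simp [facet2_add, Int.toNat_add (facet2_nonneg x.2 i) (facet2_nonneg y.2 i)]

theorem embed2_apply (x i) : ((embed2 x i : ℕ) : ℤ) = facet2 x.1 i :=
  Int.toNat_of_nonneg (facet2_nonneg x.2 i)

theorem normal2 (𝕜 : Type*) [Field 𝕜] : IsIntegrallyClosed (toricRing 𝕜 V2) := by
  refine isIntegrallyClosed_of_pure 𝕜 embed2 ?_ ?_
  · intro x y h
    apply Subtype.ext
    apply facet2_injective
    ext i
    rw [← embed2_apply, ← embed2_apply, h]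
  · intro m n d h
    have hd : ∀ i, facet2 (n.1 - m.1) i = d i := by
      intro i
      have h1 : facet2 n.1 = facet2 m.1 + facet2 (n.1 - m.1) := by
        rw [← facet2_add]; simp
      have h2 := congrFun h1 i
      rw [Pi.add_apply, ← embed2_apply, ← embed2_apply, ← h] at h2
      simp at h2
      omega
    refine ⟨⟨n.1 - m.1, mem_of_facet2_nonneg fun i => ?_⟩, ?_⟩
    · rw [hd]; simp
    · ext i
      zify
      rw [embed2_apply, hd]

theorem rep1 {x} (hx : x ∈ AddSubmonoid.closure (latticeA V1)) :
    ∃ n0 n1 n2 n3 n4 n5 : ℕ, x.1 0 = n1 + n2 + n5 ∧ x.1 1 = n1 + n3 + n5 ∧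
      x.1 2 = n2 + n3 + n5 ∧ x.1 3 = n4 + n5 ∧ x.2 = n0 + n1 + n2 + n3 + n4 + n5 := by
  induction hx using AddSubmonoid.closure_induction with
  | mem x hx =>
    obtain ⟨v, hv, rfl⟩ := hx
    simp only [V1, Set.mem_insert_iff, Set.mem_singleton_iff] at hv
    rcases hv with rfl | rfl | rfl | rfl | rfl | rfl
    · exact ⟨1, 0, 0, 0, 0, 0, by simp⟩
    · exact ⟨0, 1, 0, 0, 0, 0, by simp⟩
    · exact ⟨0, 0, 1, 0, 0, 0, by simp⟩
    · exact ⟨0, 0, 0, 1, 0, 0, by simp⟩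
    · exact ⟨0, 0, 0, 0, 1, 0, by simp⟩
    · exact ⟨0, 0, 0, 0, 0, 1, by simp⟩
  | zero => exact ⟨0, 0, 0, 0, 0, 0, by simp⟩
  | add x y _ _ hx hy =>
    obtain ⟨a0, a1, a2, a3, a4, a5, ha⟩ := hx
    obtain ⟨b0, b1, b2, b3, b4, b5, hb⟩ := hy
    refine ⟨a0 + b0, a1 + b1, a2 + b2, a3 + b3, a4 + b4, a5 + b5, ?_⟩
    simp only [Prod.fst_add, Prod.snd_add, Pi.add_apply]
    push_cast
    omega

theorem not_normal1 (𝕜 : Type*) [Field 𝕜] : ¬ IsIntegrallyClosed (toricRing 𝕜 V1) := by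
  intro hN
  have gen : ∀ v ∈ V1, (v, (1 : ℤ)) ∈ AddSubmonoid.closure (latticeA V1) :=
    fun v hv => AddSubmonoid.subset_closure ⟨v, hv, rfl⟩
  let a0 : AddSubmonoid.closure (latticeA V1) := ⟨_, gen ![0,0,0,0] (by simp [V1])⟩
  let a1 : AddSubmonoid.closure (latticeA V1) := ⟨_, gen ![1,1,0,0] (by simp [V1])⟩
  let a2 : AddSubmonoid.closure (latticeA V1) := ⟨_, gen ![1,0,1,0] (by simp [V1])⟩
  let a3 : AddSubmonoid.closure (latticeA V1) := ⟨_, gen ![0,1,1,0] (by simp [V1])⟩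
  let a4 : AddSubmonoid.closure (latticeA V1) := ⟨_, gen ![0,0,0,1] (by simp [V1])⟩
  let a5 : AddSubmonoid.closure (latticeA V1) := ⟨_, gen ![1,1,1,1] (by simp [V1])⟩
  let q : toricRing 𝕜 V1 := AddMonoidAlgebra.single a4 1
  let p : toricRing 𝕜 V1 := AddMonoidAlgebra.single (a0 + a0 + a5) 1
  have hdvd : q ^ 2 ∣ p ^ 2 := by
    refine ⟨AddMonoidAlgebra.single (a0 + a1 + a2 + a3) 1, ?_⟩
    simp only [p, q, AddMonoidAlgebra.single_pow, AddMonoidAlgebra.single_mul_single]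
    congr 1
    · apply Subtype.ext
      ext i
      · fin_cases i <;> simp [a0, a1, a2, a3, a4, a5]
      · simp [a0, a1, a2, a3, a4, a5]
    · simp
  obtain ⟨y, hy⟩ := (IsIntegrallyClosed.pow_dvd_pow_iff two_ne_zero).1 hdvd
  have h1 : p.coeff (a0 + a0 + a5) = 1 := by simp [p]
  rw [hy, AddMonoidAlgebra.coeff_single_mul_of_forall_add_ne] at h1
  · exact zero_ne_one h1
  · intro d hd
    obtain ⟨n0, n1, n2, n3, n4, n5, q0, q1, q2, q3, q4⟩ := rep1 d.2
    have hd' := congrArg Subtype.val hd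
    have e0 := congrFun (congrArg Prod.fst hd') 0
    have e1 := congrFun (congrArg Prod.fst hd') 1
    have e2 := congrFun (congrArg Prod.fst hd') 2
    have e3 := congrFun (congrArg Prod.fst hd') 3
    have e4 := congrArg Prod.snd hd'
    simp [a0, a4, a5] at e0 e1 e2 e3 e4
    omega

theorem stmt_15 (𝕜 : Type*) [Field 𝕜] :
    IsIntegrallyClosed (toricRing 𝕜 V2) ∧
      ¬ IsIntegrallyClosed (toricRing 𝕜 V1) ∧
      IsEmpty (toricRing 𝕜 V1 ≃ₐ[𝕜] toricRing 𝕜 V2) := by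
  refine ⟨normal2 𝕜, not_normal1 𝕜, ⟨fun e => not_normal1 𝕜 ?_⟩⟩
  have := normal2 𝕜
  exact IsIntegrallyClosed.of_equiv e.symm.toRingEquiv

end
end
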